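/- Let S be a numerical semigroup minimally generated by four elements n_1 < n_2 < n_3 < n_4, and for each j let c_j be the least positive integer such that c_j·n_j lies in the submonoid of ℕ generated by {n_l : l ≠ j}. Then for each i ∈ {1,2,3,4}, the set AP(S,n_i) is homogeneous if and only if the set {c_j·n_j : j ≠ i} ∩ AP(S,n_i) is homogeneous. -/

import Mathlib

open scoped BigOperators

/-- The value `Σ aᵢ nᵢ` of a tuple of coefficients `a` w.r.t. the generators `n`. -/
def sval {d : ℕ} (n : Fin d → ℕ) (a : Fin d → ℕ) : ℕ := ∑ i, a i * n i

/-- The total length `Σ aᵢ` of a factorization. -/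
def tlen {d : ℕ} (a : Fin d → ℕ) : ℕ := ∑ i, a i

/-- The submonoid of `ℕ` generated by `n`. -/
def gen {d : ℕ} (n : Fin d → ℕ) : Set ℕ := {s : ℕ | ∃ a : Fin d → ℕ, s = sval n a}

/-- The Apéry set of the semigroup generated by `n` with respect to `s`:
elements `x` of the semigroup such that `x - s` is not in the semigroup. -/
def Apery {d : ℕ} (n : Fin d → ℕ) (s : ℕ) : Set ℕ :=
  {x : ℕ | x ∈ gen n ∧ ¬ ∃ y ∈ gen n, x = s + y}

/-- A subset `T` is homogeneous if every nonzero element of `T` has all its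
factorizations of the same length. -/
def HomogSet {d : ℕ} (n : Fin d → ℕ) (T : Set ℕ) : Prop :=
  ∀ t ∈ T, t ≠ 0 → ∀ a b : Fin d → ℕ, sval n a = t → sval n b = t → tlen a = tlen b

/-- The order of `s`: the maximal length of a factorization of `s`. -/
noncomputable def ordS {d : ℕ} (n : Fin d → ℕ) (s : ℕ) : ℕ :=
  sSup {l : ℕ | ∃ a : Fin d → ℕ, sval n a = s ∧ tlen a = l}

/-- The torsion set of the semigroup generated by `n`, with respect to the
generator of index `i0` (the smallest generator). -/
noncomputable def Torsion {d : ℕ} (n : Fin d → ℕ) (i0 : Fin d) : Set ℕ :=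
  {s : ℕ | s ∈ gen n ∧ ∃ c : ℕ, 0 < c ∧ ordS n s + c < ordS n (s + c * n i0)}

/-- `n` is a minimal system of generators: any expression of a generator as a
nonnegative combination of the generators has total coefficient sum one. -/
def MinGen {d : ℕ} (n : Fin d → ℕ) : Prop :=
  ∀ r : Fin d, ∀ a : Fin d → ℕ, n r = sval n a → tlen a = 1

/-- `n` generates a numerical semigroup (cofinite in `ℕ`). -/
def IsNumerical {d : ℕ} (n : Fin d → ℕ) : Prop := {x : ℕ | x ∉ gen n}.Finite

/-- The monomial `x^a = Π xᵢ^{aᵢ}`. -/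
noncomputable def monom (k : Type*) [CommRing k] {d : ℕ} (a : Fin d → ℕ) :
    MvPolynomial (Fin d) k :=
  ∏ i, (MvPolynomial.X i : MvPolynomial (Fin d) k) ^ a i

/-- The toric ideal `I_S`: kernel of `k[x₁,…,x_d] → k[t]`, `xᵢ ↦ t^{nᵢ}`. -/
noncomputable def toricIdeal (k : Type*) [CommRing k] {d : ℕ} (n : Fin d → ℕ) :
    Ideal (MvPolynomial (Fin d) k) :=
  RingHom.ker (MvPolynomial.aeval (R := k)
    (fun i => (Polynomial.X : Polynomial k) ^ n i)).toRingHom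

/-- `E` is a minimal generating set of the ideal `I`: it spans `I` and no
proper subset spans `I`. -/
def IsMinGenSet {R : Type*} [CommRing R] (I : Ideal R) (E : Set R) : Prop :=
  Ideal.span E = I ∧ ∀ E' : Set R, E' ⊂ E → Ideal.span E' ≠ I

/-- Membership of an integer in the semigroup generated by `n`. -/
def memZ {d : ℕ} (n : Fin d → ℕ) (z : ℤ) : Prop := ∃ x ∈ gen n, (x : ℤ) = z

/-- A numerical semigroup with Frobenius number `F = max (ℤ ∖ S)` is symmetric
if for every integer `z`, `z ∈ S ↔ F - z ∉ S`. -/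
def IsSymmetric {d : ℕ} (n : Fin d → ℕ) : Prop :=
  ∃ F : ℤ, ¬ memZ n F ∧ (∀ z : ℤ, F < z → memZ n z) ∧
    ∀ z : ℤ, memZ n z ↔ ¬ memZ n (F - z)

/-- A numerical semigroup with Frobenius number `F = max (ℤ ∖ S)` is
pseudo-symmetric if `F` is even and for every integer `z`,
`z ∈ S ↔ (z ≠ F/2 ∧ F - z ∉ S)`. -/
def IsPseudoSymmetric {d : ℕ} (n : Fin d → ℕ) : Prop :=
  ∃ F : ℤ, ¬ memZ n F ∧ (∀ z : ℤ, F < z → memZ n z) ∧ F % 2 = 0 ∧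
    ∀ z : ℤ, memZ n z ↔ (z ≠ F / 2 ∧ ¬ memZ n (F - z))

/-- The generators `q·m₁,…,q·m_d, p·n₁,…,p·n_e` of the gluing of two numerical
semigroups. -/
def glueGen {d e : ℕ} (mg : Fin d → ℕ) (ng : Fin e → ℕ) (p q : ℕ) :
    Fin (d + e) → ℕ :=
  Fin.append (fun i => q * mg i) (fun i => p * ng i)
theorem sval_add' {d : ℕ} (n a b : Fin d → ℕ) : sval n (a + b) = sval n a + sval n b := by
  simp [sval, add_mul, Finset.sum_add_distrib]

theorem tlen_add' {d : ℕ} (a b : Fin d → ℕ) : tlen (a + b) = tlen a + tlen b := by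
  simp [tlen, Finset.sum_add_distrib]

theorem sval_single' {d : ℕ} (n : Fin d → ℕ) (j : Fin d) (x : ℕ) :
    sval n (Pi.single j x) = x * n j := by
  simp [sval, Pi.single_apply]

theorem tlen_single' {d : ℕ} (j : Fin d) (x : ℕ) :
    tlen (Pi.single j x : Fin d → ℕ) = x := by
  simp [tlen, Pi.single_apply]

theorem split_off {d : ℕ} (a : Fin d → ℕ) (j : Fin d) (h : 0 < a j) :
    ∃ a' : Fin d → ℕ, a = Pi.single j 1 + a' := by
  refine ⟨fun m => if m = j then a j - 1 else a m, ?_⟩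
  ext m
  by_cases hm : m = j
  · subst hm; simp; omega
  · simp [hm]

theorem eq_single {d : ℕ} (a : Fin d → ℕ) (j : Fin d) (h : ∀ k, k ≠ j → a k = 0) :
    a = Pi.single j (a j) := by
  ext m
  by_cases hm : m = j
  · subst hm; simp
  · simp [hm, h m hm]

theorem apery_of_add {d : ℕ} (n : Fin d → ℕ) (s x y : ℕ) (hx : x ∈ gen n) (hy : y ∈ gen n)
    (h : x + y ∈ Apery n s) : x ∈ Apery n s := by
  refine ⟨hx, ?_⟩
  rintro ⟨z, ⟨u, hu⟩, hz⟩
  obtain ⟨v, hv⟩ := hy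
  exact h.2 ⟨z + y, ⟨u + v, by rw [sval_add', hu, hv]⟩, by omega⟩

theorem apery_coord {d : ℕ} (n : Fin d → ℕ) (i : Fin d) (a : Fin d → ℕ)
    (h : sval n a ∈ Apery n (n i)) : a i = 0 := by
  by_contra h0
  obtain ⟨a', ha'⟩ := split_off a i (Nat.pos_of_ne_zero h0)
  refine h.2 ⟨sval n a', ⟨a', rfl⟩, ?_⟩
  rw [ha', sval_add', sval_single', one_mul]

theorem fin4_cover (i j k l m : Fin 4) (h1 : j ≠ i) (h2 : k ≠ i) (h3 : l ≠ i)
    (h4 : k ≠ j) (h5 : l ≠ j) (h6 : k ≠ l) : m = i ∨ m = j ∨ m = k ∨ m = l := by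
  omega

theorem disjoint_cases (a b : Fin 4 → ℕ) (i : Fin 4) (ha : a i = 0) (hb : b i = 0)
    (h : ∀ k, a k = 0 ∨ b k = 0) :
    ∃ j, j ≠ i ∧ ((∀ k, k ≠ j → a k = 0) ∨ (∀ k, k ≠ j → b k = 0)) := by
  have h0 := h 0
  have h1 := h 1
  have h2 := h 2
  have h3 := h 3
  simp only [Fin.exists_fin_succ, Fin.forall_fin_succ]
  fin_cases i <;> simp at * <;> omega

theorem single_case (n : Fin 4 → ℕ) (hinj : Function.Injective n) (hn : ∀ j, 0 < n j)
    (c : Fin 4 → ℕ)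
    (hc : ∀ l : Fin 4, 0 < c l ∧
      (∃ a : Fin 4 → ℕ, a l = 0 ∧ c l * n l = sval n a) ∧
      (∀ c' : ℕ, 0 < c' → (∃ a : Fin 4 → ℕ, a l = 0 ∧ c' * n l = sval n a) →
        c l ≤ c'))
    (i : Fin 4)
    (hH : HomogSet n ({x : ℕ | ∃ j : Fin 4, j ≠ i ∧ x = c j * n j} ∩ Apery n (n i)))
    (t : ℕ) (ht : t ∈ Apery n (n i))
    (Q : ∀ a b : Fin 4 → ℕ, sval n a = t → sval n b = t → ∀ k, 0 < a k → 0 < b k →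
      tlen a = tlen b)
    (j : Fin 4) (hji : j ≠ i) (a b : Fin 4 → ℕ) (ha : sval n a = t) (hb : sval n b = t)
    (haj : ∀ k, k ≠ j → a k = 0) (hab : a j = 0 ∨ b j = 0) : tlen a = tlen b := by
  obtain ⟨hc0, ⟨p, hpj, hp⟩, hcm⟩ := hc j
  have hae := eq_single a j haj
  have hta : a j * n j = t := by rw [← ha, hae, sval_single']; simp
  rcases Nat.eq_zero_or_pos (a j) with h0 | h0
  · have : ∀ k, b k = 0 := by
      have : sval n b = 0 := by rw [hb, ← hta, h0, zero_mul]
      simp only [sval, Finset.sum_eq_zero_iff] at this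
      intro k
      have := this k (Finset.mem_univ _)
      exact (Nat.mul_eq_zero.1 this).resolve_right (hn k).ne'
    rw [hae, h0]
    simp [tlen, this]
  have hbj : b j = 0 := by omega
  have hle : c j ≤ a j := hcm (a j) h0 ⟨b, hbj, by rw [hta, hb]⟩
  obtain ⟨r, hr⟩ := Nat.exists_eq_add_of_le hle
  have hmem : c j * n j ∈ Apery n (n i) := by
    apply apery_of_add n (n i) (c j * n j) (r * n j) ⟨p, hp⟩
      ⟨Pi.single j r, (sval_single' n j r).symm⟩
    rwa [← add_mul, ← hr, hta]
  have hlen : tlen p = c j := by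
    rw [← tlen_single' j (c j)]
    exact hH (c j * n j) ⟨⟨j, hji, rfl⟩, hmem⟩ (Nat.mul_pos hc0 (hn j)).ne' _ _ hp.symm
      (sval_single' n j (c j))
  have hpi : p i = 0 := apery_coord n i p (hp ▸ hmem)
  have hbi : b i = 0 := apery_coord n i b (hb ▸ ht)
  have hs' : sval n (Pi.single j r + p) = t := by
    rw [sval_add', sval_single', ← hp, ← hta, hr]; ring
  have hl' : tlen (Pi.single j r + p) = tlen a := by
    rw [tlen_add', tlen_single', hlen, hae, tlen_single', hr]; ring
  by_contra hne
  have key : ∀ k, 0 < p k → b k = 0 := by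
    intro k hk
    by_contra hbk
    apply hne
    rw [← hl']
    exact Q _ _ hs' hb k (by simp; omega) (Nat.pos_of_ne_zero hbk)
  obtain ⟨k, hk⟩ : ∃ k, 0 < p k := by
    by_contra hcon
    push Not at hcon
    have : tlen p = 0 := by simp [tlen]; intro m; have := hcon m; omega
    omega
  obtain ⟨l, hl⟩ : ∃ l, 0 < b l := by
    by_contra hcon
    push Not at hcon
    have : sval n b = 0 := by simp [sval]; intro m; have := hcon m; omega
    have := Nat.mul_pos h0 (hn j)
    omega
  have hbk := key k hk
  have hpl : p l = 0 := by
    by_contra h; have := key l (Nat.pos_of_ne_zero h); omega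
  have hpe : p = Pi.single k (p k) := by
    apply eq_single
    intro m hm
    rcases fin4_cover i j k l m hji (by rintro rfl; omega) (by rintro rfl; omega)
      (by rintro rfl; omega) (by rintro rfl; omega) (by rintro rfl; omega) with h | h | h | h
    · rw [h, hpi]
    · rw [h, hpj]
    · exact absurd h hm
    · rw [h, hpl]
  rw [hpe, tlen_single'] at hlen
  rw [hpe, sval_single', hlen] at hp
  have := hinj (Nat.eq_of_mul_eq_mul_left hc0 hp)
  subst this
  omega

/-- in embedding dimension 4, `AP(S,nᵢ)` is homogeneous iff
`{cⱼ·nⱼ : j ≠ i} ∩ AP(S,nᵢ)` is homogeneous, where `cⱼ` is the least positive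
integer with `cⱼ·nⱼ` in the submonoid generated by the other generators. -/
theorem statement8 (n : Fin 4 → ℕ) (hmono : StrictMono n) (hpos : 0 < n 0)
    (hnum : IsNumerical n) (hmin : MinGen n)
    (c : Fin 4 → ℕ)
    (hc : ∀ l : Fin 4, 0 < c l ∧
      (∃ a : Fin 4 → ℕ, a l = 0 ∧ c l * n l = sval n a) ∧
      (∀ c' : ℕ, 0 < c' → (∃ a : Fin 4 → ℕ, a l = 0 ∧ c' * n l = sval n a) →
        c l ≤ c')) :
    ∀ i : Fin 4, HomogSet n (Apery n (n i)) ↔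
      HomogSet n ({x : ℕ | ∃ j : Fin 4, j ≠ i ∧ x = c j * n j} ∩
        Apery n (n i)) := by
  intro i
  refine ⟨fun h t ht => h t ht.2, fun hH => ?_⟩
  have hn : ∀ j, 0 < n j := fun j => lt_of_lt_of_le hpos (hmono.monotone (Fin.zero_le j))
  have main : ∀ t, t ∈ Apery n (n i) → ∀ a b : Fin 4 → ℕ, sval n a = t → sval n b = t →
      tlen a = tlen b := by
    intro t
    induction t using Nat.strong_induction_on with
    | _ t ih =>
    intro ht
    have Q : ∀ a b : Fin 4 → ℕ, sval n a = t → sval n b = t → ∀ k, 0 < a k → 0 < b k →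
        tlen a = tlen b := by
      intro a b ha hb k hak hbk
      obtain ⟨a', rfl⟩ := split_off a k hak
      obtain ⟨b', rfl⟩ := split_off b k hbk
      rw [sval_add', sval_single', one_mul] at ha hb
      have hk := hn k
      rw [tlen_add', tlen_add', ih (sval n a') (by omega) ?_ a' b' rfl (by omega)]
      apply apery_of_add n (n i) (sval n a') (n k) ⟨a', rfl⟩
        ⟨Pi.single k 1, by rw [sval_single', one_mul]⟩
      rwa [add_comm, ha]
    intro a b ha hb
    by_cases hd : ∀ k, a k = 0 ∨ b k = 0
    · obtain ⟨j, hji, h | h⟩ := disjoint_cases a b i (apery_coord n i a (ha ▸ ht))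
        (apery_coord n i b (hb ▸ ht)) hd
      · exact single_case n hmono.injective hn c hc i hH t ht Q j hji a b ha hb h (hd j)
      · exact (single_case n hmono.injective hn c hc i hH t ht Q j hji b a hb ha h (hd j).symm).symm
    · push Not at hd
      obtain ⟨k, h1, h2⟩ := hd
      exact Q a b ha hb k (Nat.pos_of_ne_zero h1) (Nat.pos_of_ne_zero h2)
  exact fun t ht _ => main t ht
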